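/- The only small solution of equation (E_A) (i.e., a solution (x_0, x_1, x_2, ...) with ord(x_i) → ∞) is the zero solution. (Lemma 4.6) -/

import Mathlib

/-!
Write equation (E_A) as `Q(x_i) = -(R(x_{i-1}) + θ⁸ x_{i-2}¹⁶)`, where `Q` (`eaQ`) and `R`
collect the monomials in `x_i` and in `x_{i-1}`; the bracket is `eaRhs`. The Newton polygon of `Q` has
slopes `-2` and `-1/2`, so the first nonzero term of a solution has valuation `2` or `1/2`.

The proof shows that valuations never exceed `2` from then on (`EAState`, `eaState_step`):
a term of valuation `2` is only followed by valuation `2` or `1/2`; a term of valuation `1/2` makes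
the right-hand side have valuation exactly `-6`, because the two leading monomials of `R` are
`θ⁻⁴` times those of `Q` and hence nearly cancel (`ord_eaRhs_half`), and the next term then has
valuation `1/2` or in `(1, 2)`; a term of valuation `u ∈ (1, 2)` is followed by valuation
`1/2` or in `(1, 2)`, since the right-hand side has valuation `4u - 8 < 0`.
So a nonzero solution cannot be small.
-/

/-- Extension of a sequence by zero to negative indices (convention `x_j = 0` for `j < 0`). -/
def extSeq {K : Type*} [Zero K] (x : ℕ → K) : ℤ → K :=
  fun j => if 0 ≤ j then x j.toNat else 0

/-- A solution of the affine equation (E_A) of the t-motive `M(A)`,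
`A = [[θ, θ⁶],[θ⁻², 0]]`, `q = 2`. -/
def IsSolEA {K : Type*} [Field K] (θ : K) (x : ℕ → K) : Prop :=
  ∀ i : ℕ,
    θ ^ 20 * x i ^ 16 + θ ^ 16 * x i ^ 8 + θ ^ 4 * x i ^ 4 + θ ^ 3 * x i ^ 2 + θ ^ 2 * x i
      + (θ ^ 16 + θ ^ 12) * extSeq x ((i : ℤ) - 1) ^ 16
      + θ ^ 12 * extSeq x ((i : ℤ) - 1) ^ 8
      + (θ ^ 8 + θ ^ 2) * extSeq x ((i : ℤ) - 1) ^ 4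
      + θ ^ 8 * extSeq x ((i : ℤ) - 2) ^ 16 = 0

/-- A sequence is small if its valuations tend to `+∞`. -/
def SmallSeq {K : Type*} [Field K] (ord : K → WithTop ℚ) (x : ℕ → K) : Prop :=
  ∀ C : ℚ, ∃ N : ℕ, ∀ i ≥ N, (C : WithTop ℚ) ≤ ord (x i)

section EAProof

variable {K : Type*} [Field K] (v : AddValuation K (WithTop ℚ))

/-- The part of (E_A) involving the current term `x_i`. -/
def eaQ (θ c : K) : K :=
  θ ^ 20 * c ^ 16 + θ ^ 16 * c ^ 8 + θ ^ 4 * c ^ 4 + θ ^ 3 * c ^ 2 + θ ^ 2 * c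

/-- The part of (E_A) involving the two previous terms `a = x_{i-2}` and `b = x_{i-1}`. -/
def eaRhs (θ a b : K) : K :=
  (θ ^ 16 + θ ^ 12) * b ^ 16 + θ ^ 12 * b ^ 8 + (θ ^ 8 + θ ^ 2) * b ^ 4 + θ ^ 8 * a ^ 16

/-- The invariant on two consecutive terms `(a, b)` of a solution whose first nonzero term has
already occurred. In the case of valuation `1/2` the lower bound on `v (eaQ θ b)` records the
cancellation between the two leading monomials of `eaQ θ b`. -/
def EAState (θ a b : K) : Prop :=
  ∃ u : ℚ, v b = (u : WithTop ℚ) ∧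
    ((u = 1 / 2 ∧ ((1 / 2 : ℚ) : WithTop ℚ) ≤ v a ∧ ((-6 : ℚ) : WithTop ℚ) ≤ v (eaQ θ b)) ∨
     (1 < u ∧ u < 2 ∧ ((1 / 2 : ℚ) : WithTop ℚ) ≤ v a) ∨
     (u = 2 ∧ ((2 : ℚ) : WithTop ℚ) ≤ v a))

variable {v} {θ : K}

lemma ord_monomial (hθ : v θ = ((-1 : ℚ) : WithTop ℚ)) {z : K} {u : ℚ}
    (hz : v z = (u : WithTop ℚ)) (n m : ℕ) :
    v (θ ^ n * z ^ m) = ((-n + m * u : ℚ) : WithTop ℚ) := by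
  rw [AddValuation.map_mul, AddValuation.map_pow, AddValuation.map_pow, hθ, hz,
    ← WithTop.coe_nsmul, ← WithTop.coe_nsmul, ← WithTop.coe_add]
  simp

lemma le_ord_monomial (hθ : v θ = ((-1 : ℚ) : WithTop ℚ)) {z : K} {r : ℚ}
    (hz : (r : WithTop ℚ) ≤ v z) (n m : ℕ) :
    ((-n + m * r : ℚ) : WithTop ℚ) ≤ v (θ ^ n * z ^ m) := by
  by_cases h0 : v z = ⊤
  · rw [(AddValuation.top_iff v).1 h0]
    rcases Nat.eq_zero_or_pos m with rfl | hm
    · have := ord_monomial hθ (z := 1) (u := 0) (by simp) n 0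
      simpa using this.ge
    · simp [hm.ne']
  · obtain ⟨u, hu⟩ := WithTop.ne_top_iff_exists.1 h0
    rw [ord_monomial hθ hu.symm, WithTop.coe_le_coe]
    rw [← hu, WithTop.coe_le_coe] at hz
    gcongr

lemma ord_add_dominant {x y : K} {d : ℚ} (hx : v x = (d : WithTop ℚ))
    (hy : (d : WithTop ℚ) < v y) : v (x + y) = (d : WithTop ℚ) := by
  rw [AddValuation.map_add_eq_of_lt_left v (by rwa [hx]), hx]

lemma lt_of_ord_eq {z : K} {d e : ℚ} (hz : v z = (e : WithTop ℚ)) (h : d < e) :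
    (d : WithTop ℚ) < v z := by
  rw [hz]; exact WithTop.coe_lt_coe.2 h

lemma le_of_ord_eq {z : K} {d e : ℚ} (hz : v z = (e : WithTop ℚ)) (h : d ≤ e) :
    (d : WithTop ℚ) ≤ v z := by
  rw [hz]; exact WithTop.coe_le_coe.2 h

/-- The values of `v (eaQ θ c)` read off from the Newton polygon of `eaQ θ`. -/
lemma ord_eaQ (hθ : v θ = ((-1 : ℚ) : WithTop ℚ)) {c : K} {w : ℚ}
    (hc : v c = (w : WithTop ℚ)) :
    (w < 1 / 2 → v (eaQ θ c) = ((16 * w - 20 : ℚ) : WithTop ℚ)) ∧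
    (1 / 2 < w → w < 2 → v (eaQ θ c) = ((8 * w - 16 : ℚ) : WithTop ℚ)) ∧
    (2 < w → v (eaQ θ c) = ((w - 2 : ℚ) : WithTop ℚ)) ∧
    (w = 2 → ((0 : ℚ) : WithTop ℚ) ≤ v (eaQ θ c)) := by
  have h16 := ord_monomial hθ hc 20 16
  have h8 := ord_monomial hθ hc 16 8
  have h4 := ord_monomial hθ hc 4 4
  have h2 := ord_monomial hθ hc 3 2
  have h1 := ord_monomial hθ hc 2 1
  rw [pow_one] at h1
  refine ⟨fun h => ?_, fun h h' => ?_, fun h => ?_, fun h => ?_⟩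
  · have : eaQ θ c = θ ^ 20 * c ^ 16 +
        (θ ^ 16 * c ^ 8 + θ ^ 4 * c ^ 4 + θ ^ 3 * c ^ 2 + θ ^ 2 * c) := by
      unfold eaQ; ring
    rw [this]
    refine ord_add_dominant (by rw [h16]; congr 1; ring) ?_
    exact v.map_lt_add (v.map_lt_add (v.map_lt_add (lt_of_ord_eq h8 (by push_cast; linarith))
      (lt_of_ord_eq h4 (by push_cast; linarith))) (lt_of_ord_eq h2 (by push_cast; linarith)))
      (lt_of_ord_eq h1 (by push_cast; linarith))
  · have : eaQ θ c = θ ^ 16 * c ^ 8 +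
        (θ ^ 20 * c ^ 16 + θ ^ 4 * c ^ 4 + θ ^ 3 * c ^ 2 + θ ^ 2 * c) := by
      unfold eaQ; ring
    rw [this]
    refine ord_add_dominant (by rw [h8]; congr 1; ring) ?_
    exact v.map_lt_add (v.map_lt_add (v.map_lt_add (lt_of_ord_eq h16 (by push_cast; linarith))
      (lt_of_ord_eq h4 (by push_cast; linarith))) (lt_of_ord_eq h2 (by push_cast; linarith)))
      (lt_of_ord_eq h1 (by push_cast; linarith))
  · have : eaQ θ c = θ ^ 2 * c +
        (θ ^ 20 * c ^ 16 + θ ^ 16 * c ^ 8 + θ ^ 4 * c ^ 4 + θ ^ 3 * c ^ 2) := by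
      unfold eaQ; ring
    rw [this]
    refine ord_add_dominant (by rw [h1]; congr 1; ring) ?_
    exact v.map_lt_add (v.map_lt_add (v.map_lt_add (lt_of_ord_eq h16 (by push_cast; linarith))
      (lt_of_ord_eq h8 (by push_cast; linarith))) (lt_of_ord_eq h4 (by push_cast; linarith)))
      (lt_of_ord_eq h2 (by push_cast; linarith))
  · exact v.map_le_add (v.map_le_add (v.map_le_add (v.map_le_add
      (le_of_ord_eq h16 (by push_cast; linarith)) (le_of_ord_eq h8 (by push_cast; linarith)))
      (le_of_ord_eq h4 (by push_cast; linarith))) (le_of_ord_eq h2 (by push_cast; linarith)))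
      (le_of_ord_eq h1 (by push_cast; linarith))

lemma ne_zero_of_ord_eaQ {c : K} {d : ℚ} (h : v (eaQ θ c) = (d : WithTop ℚ)) :
    ∃ w : ℚ, v c = (w : WithTop ℚ) := by
  have hc : v c ≠ ⊤ := by
    intro h0
    rw [(AddValuation.top_iff v).1 h0] at h
    simp [eaQ] at h
  obtain ⟨w, hw⟩ := WithTop.ne_top_iff_exists.1 hc
  exact ⟨w, hw.symm⟩

lemma ord_root_neg (hθ : v θ = ((-1 : ℚ) : WithTop ℚ)) {c : K} {d : ℚ}
    (h : v (eaQ θ c) = (d : WithTop ℚ)) (hd : -6 ≤ d) (hd0 : d < 0) :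
    ∃ w : ℚ, v c = (w : WithTop ℚ) ∧ (w = 1 / 2 ∨ (1 < w ∧ w < 2)) := by
  obtain ⟨w, hw⟩ := ne_zero_of_ord_eaQ h
  obtain ⟨h1, h2, h3, h4⟩ := ord_eaQ hθ hw
  rw [h] at h1 h2 h3 h4
  simp only [WithTop.coe_eq_coe, WithTop.coe_le_coe] at h1 h2 h3 h4
  refine ⟨w, hw, ?_⟩
  rcases lt_trichotomy w (1 / 2) with hlt | heq | hgt
  · linarith [h1 hlt]
  · exact Or.inl heq
  · rcases lt_trichotomy w 2 with hlt' | heq' | hgt'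
    · exact Or.inr ⟨by linarith [h2 hgt hlt'], hlt'⟩
    · linarith [h4 heq']
    · linarith [h3 hgt']

/-- The value `0` of `v (eaQ θ c)` arises after a term of valuation `2`, and the value `⊤` at the
first nonzero term of a solution, where `eaQ θ c = 0`. -/
lemma ord_root_zero (hθ : v θ = ((-1 : ℚ) : WithTop ℚ)) {c : K} (hc0 : c ≠ 0)
    (h : v (eaQ θ c) = ((0 : ℚ) : WithTop ℚ) ∨ v (eaQ θ c) = ⊤) :
    ∃ w : ℚ, v c = (w : WithTop ℚ) ∧ (w = 1 / 2 ∨ w = 2) := by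
  obtain ⟨w, hw⟩ := WithTop.ne_top_iff_exists.1 ((AddValuation.ne_top_iff v).2 hc0)
  obtain ⟨h1, h2, h3, -⟩ := ord_eaQ hθ hw.symm
  have key : ∀ e : ℚ, v (eaQ θ c) = (e : WithTop ℚ) → e = 0 := by
    intro e he
    rw [he] at h
    rcases h with h | h
    · exact WithTop.coe_eq_coe.1 h
    · exact absurd h (WithTop.coe_ne_top)
  refine ⟨w, hw.symm, ?_⟩
  rcases lt_trichotomy w (1 / 2) with hlt | heq | hgt
  · linarith [key _ (h1 hlt)]
  · exact Or.inl heq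
  · rcases lt_trichotomy w 2 with hlt' | heq' | hgt'
    · linarith [key _ (h2 hgt hlt')]
    · exact Or.inr heq'
    · linarith [key _ (h3 hgt')]

/-- After a term of valuation `1/2` the right-hand side has valuation exactly `-6`: the monomials
`θ¹⁶b¹⁶ + θ¹²b⁸`, individually of valuation `-8`, equal `θ⁻⁴` times the leading part of
`eaQ θ b`, and `v (eaQ θ b) ≥ -6` forces their sum to have valuation at least `-2`. -/
lemma ord_eaRhs_half (hθ : v θ = ((-1 : ℚ) : WithTop ℚ)) {a b : K}
    (hb : v b = ((1 / 2 : ℚ) : WithTop ℚ)) (ha : ((1 / 2 : ℚ) : WithTop ℚ) ≤ v a)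
    (hQ : ((-6 : ℚ) : WithTop ℚ) ≤ v (eaQ θ b)) :
    v (eaRhs θ a b) = ((-6 : ℚ) : WithTop ℚ) := by
  have hlead : ((-2 : ℚ) : WithTop ℚ) ≤ v (θ ^ 16 * b ^ 16 + θ ^ 12 * b ^ 8) := by
    set y := θ ^ 16 * b ^ 16 + θ ^ 12 * b ^ 8 with hy
    have h4 := ord_monomial hθ hb 4 4
    have h2 := ord_monomial hθ hb 3 2
    have h1 := ord_monomial hθ hb 2 1
    rw [pow_one] at h1
    have e : θ ^ 4 * y ^ 1 = eaQ θ b - (θ ^ 4 * b ^ 4 + θ ^ 3 * b ^ 2 + θ ^ 2 * b) := by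
      rw [hy]; unfold eaQ; ring
    have hle : ((-6 : ℚ) : WithTop ℚ) ≤ v (θ ^ 4 * y ^ 1) := by
      rw [e]
      exact v.map_le_sub hQ (v.map_le_add (v.map_le_add (le_of_ord_eq h4 (by norm_num))
        (le_of_ord_eq h2 (by norm_num))) (le_of_ord_eq h1 (by norm_num)))
    by_cases h0 : v y = ⊤
    · rw [h0]; exact le_top
    · obtain ⟨u, hu⟩ := WithTop.ne_top_iff_exists.1 h0
      rw [ord_monomial hθ hu.symm, WithTop.coe_le_coe] at hle
      refine le_of_ord_eq hu.symm ?_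
      push_cast at hle
      linarith
  have h16 := ord_monomial hθ hb 12 16
  have h8 := ord_monomial hθ hb 8 4
  have h2 := ord_monomial hθ hb 2 4
  have ha' := le_ord_monomial hθ ha 8 16
  have : eaRhs θ a b = θ ^ 8 * b ^ 4 + ((θ ^ 16 * b ^ 16 + θ ^ 12 * b ^ 8) +
      θ ^ 12 * b ^ 16 + θ ^ 2 * b ^ 4 + θ ^ 8 * a ^ 16) := by
    unfold eaRhs; ring
  rw [this]
  refine ord_add_dominant (by rw [h8]; congr 1; norm_num) ?_
  refine v.map_lt_add (v.map_lt_add (v.map_lt_add (lt_of_lt_of_le ?_ hlead)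
    (lt_of_ord_eq h16 (by norm_num))) (lt_of_ord_eq h2 (by norm_num))) (lt_of_lt_of_le ?_ ha')
  · exact WithTop.coe_lt_coe.2 (by norm_num)
  · exact WithTop.coe_lt_coe.2 (by norm_num)

/-- When `v b > 1` the monomial `θ⁸b⁴` dominates the right-hand side, provided `θ⁸a¹⁶` has
larger valuation. -/
lemma ord_eaRhs_gt_one (hθ : v θ = ((-1 : ℚ) : WithTop ℚ)) {a b : K} {u r : ℚ}
    (hb : v b = (u : WithTop ℚ)) (hu : 1 < u) (ha : (r : WithTop ℚ) ≤ v a) (hr : u < 4 * r) :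
    v (eaRhs θ a b) = ((4 * u - 8 : ℚ) : WithTop ℚ) := by
  have h16 := ord_monomial hθ hb 16 16
  have h16' := ord_monomial hθ hb 12 16
  have h12 := ord_monomial hθ hb 12 8
  have h8 := ord_monomial hθ hb 8 4
  have h2 := ord_monomial hθ hb 2 4
  have ha' := le_ord_monomial hθ ha 8 16
  have : eaRhs θ a b = θ ^ 8 * b ^ 4 + (θ ^ 16 * b ^ 16 + θ ^ 12 * b ^ 16 + θ ^ 12 * b ^ 8 +
      θ ^ 2 * b ^ 4 + θ ^ 8 * a ^ 16) := by
    unfold eaRhs; ring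
  rw [this]
  refine ord_add_dominant (by rw [h8]; congr 1; ring) ?_
  refine v.map_lt_add (v.map_lt_add (v.map_lt_add (v.map_lt_add (lt_of_ord_eq h16
    (by push_cast; linarith)) (lt_of_ord_eq h16' (by push_cast; linarith))) (lt_of_ord_eq h12 (by push_cast; linarith)))
    (lt_of_ord_eq h2 (by push_cast; linarith))) (lt_of_lt_of_le ?_ ha')
  exact WithTop.coe_lt_coe.2 (by push_cast; linarith)

lemma eaState_of_neg (hθ : v θ = ((-1 : ℚ) : WithTop ℚ)) {b c : K} {d : ℚ}
    (h : v (eaQ θ c) = (d : WithTop ℚ)) (hd : -6 ≤ d) (hd0 : d < 0)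
    (hb : ((1 / 2 : ℚ) : WithTop ℚ) ≤ v b) : EAState v θ b c := by
  obtain ⟨w, hw, rfl | ⟨h1, h2⟩⟩ := ord_root_neg hθ h hd hd0
  · exact ⟨_, hw, Or.inl ⟨rfl, hb, le_of_ord_eq h hd⟩⟩
  · exact ⟨w, hw, Or.inr (Or.inl ⟨h1, h2, hb⟩)⟩

lemma eaState_of_zero (hθ : v θ = ((-1 : ℚ) : WithTop ℚ)) {b c : K} (hc0 : c ≠ 0)
    (h : v (eaQ θ c) = ((0 : ℚ) : WithTop ℚ) ∨ v (eaQ θ c) = ⊤)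
    (hb : ((2 : ℚ) : WithTop ℚ) ≤ v b) : EAState v θ b c := by
  obtain ⟨w, hw, rfl | rfl⟩ := ord_root_zero hθ hc0 h
  · refine ⟨_, hw, Or.inl ⟨rfl, le_trans (WithTop.coe_le_coe.2 (by norm_num)) hb, ?_⟩⟩
    rcases h with h | h
    · exact le_of_ord_eq h (by norm_num)
    · rw [h]; exact le_top
  · exact ⟨_, hw, Or.inr (Or.inr ⟨rfl, hb⟩)⟩

/-- The invariant propagates along a solution. -/
lemma eaState_step (hθ : v θ = ((-1 : ℚ) : WithTop ℚ)) {a b c : K} (hs : EAState v θ a b)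
    (heq : eaQ θ c + eaRhs θ a b = 0) : EAState v θ b c := by
  have hv : v (eaQ θ c) = v (eaRhs θ a b) := by
    rw [eq_neg_of_add_eq_zero_left heq, v.map_neg]
  obtain ⟨u, hb, ⟨rfl, ha, hQ⟩ | ⟨h1, h2, ha⟩ | ⟨rfl, ha⟩⟩ := hs
  · rw [ord_eaRhs_half hθ hb ha hQ] at hv
    exact eaState_of_neg hθ hv le_rfl (by norm_num) hb.ge
  · rw [ord_eaRhs_gt_one hθ hb h1 ha (by linarith)] at hv
    exact eaState_of_neg hθ hv (by linarith) (by linarith) (le_of_ord_eq hb (by linarith))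
  · rw [ord_eaRhs_gt_one hθ hb (by norm_num) ha (by norm_num)] at hv
    norm_num at hv
    refine eaState_of_zero hθ ?_ (Or.inl hv) hb.ge
    rintro rfl
    simp [eaQ] at hv

lemma EAState.ord_le_two {a b : K} (hs : EAState v θ a b) : v b ≤ ((2 : ℚ) : WithTop ℚ) := by
  obtain ⟨u, hb, h⟩ := hs
  rw [hb, WithTop.coe_le_coe]
  rcases h with ⟨rfl, -⟩ | ⟨-, h, -⟩ | ⟨rfl, -⟩
  · norm_num
  · exact h.le
  · exact le_rfl

end EAProof

/-- Lemma 4.6: the only small solution of (E_A) is the zero solution. -/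
theorem EA_no_nonzero_small_solution
    {K : Type*} [Field K] [IsAlgClosed K] [CharP K 2]
    (ord : K → WithTop ℚ)
    (hord_top : ∀ z : K, ord z = ⊤ ↔ z = 0)
    (hord_mul : ∀ z w : K, ord (z * w) = ord z + ord w)
    (hord_add : ∀ z w : K, min (ord z) (ord w) ≤ ord (z + w))
    (hord_surj : Function.Surjective ord)
    (θ : K) (hθ : ord θ = ((-1 : ℚ) : WithTop ℚ)) :
    ∀ x : ℕ → K, IsSolEA θ x → SmallSeq ord x → ∀ i, x i = 0 := by
  intro x hx hsmall
  have hord_one : ord 1 = 0 := by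
    have hne : ord 1 ≠ ⊤ := by rw [Ne, hord_top]; exact one_ne_zero
    obtain ⟨t, ht⟩ := WithTop.ne_top_iff_exists.1 hne
    have h := hord_mul 1 1
    rw [mul_one, ← ht, ← WithTop.coe_add, WithTop.coe_eq_coe] at h
    rw [← ht, show t = 0 by linarith, WithTop.coe_zero]
  let v : AddValuation K (WithTop ℚ) :=
    AddValuation.of ord ((hord_top 0).2 rfl) hord_one hord_add hord_mul
  have hvθ : v θ = ((-1 : ℚ) : WithTop ℚ) := hθ
  have hnat : ∀ i : ℕ, extSeq x (i : ℤ) = x i := fun i => by simp [extSeq]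
  have hsol : ∀ i : ℕ,
      eaQ θ (x i) + eaRhs θ (extSeq x ((i : ℤ) - 2)) (extSeq x ((i : ℤ) - 1)) = 0 := by
    intro i
    rw [← hx i, eaQ, eaRhs]
    ring
  by_contra! hne
  classical
  have hi0 := Nat.find_spec hne
  set n := Nat.find hne with hn
  have hbefore : ∀ j : ℤ, j < n → extSeq x j = 0 := by
    intro j hj
    unfold extSeq
    split_ifs with h
    · by_contra hcon
      have := Nat.find_min' hne hcon
      omega
    · rfl
  have hstate : ∀ k : ℕ, EAState v θ (extSeq x (((n + k : ℕ) : ℤ) - 1)) (x (n + k)) := by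
    intro k
    induction k with
    | zero =>
      have h := hsol n
      rw [hbefore _ (by omega), hbefore _ (by omega)] at h
      have h0 : eaQ θ (x n) = 0 := by simpa [eaRhs] using h
      rw [Nat.add_zero, hbefore _ (by omega)]
      exact eaState_of_zero hvθ hi0 (Or.inr (by rw [h0, v.map_zero]))
        (by rw [v.map_zero]; exact le_top)
    | succ k ih =>
      have h := hsol (n + (k + 1))
      have e1 : ((n + (k + 1) : ℕ) : ℤ) - 1 = ((n + k : ℕ) : ℤ) := by push_cast; ring
      have e2 : ((n + (k + 1) : ℕ) : ℤ) - 2 = ((n + k : ℕ) : ℤ) - 1 := by push_cast; ring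
      rw [e1, e2, hnat] at h
      rw [e1, hnat]
      exact eaState_step hvθ ih h
  obtain ⟨N, hN⟩ := hsmall 3
  have hle := (hN (n + N) (Nat.le_add_left _ _)).trans (hstate N).ord_le_two
  rw [WithTop.coe_le_coe] at hle
  norm_num at hle
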